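/- Let w₁, w₂ ∈ S_m and set B := N(w₁) ∩ N(w₂). Assume B is nonempty, pairwise orthogonal, and every element of B is a simple pair (of the form (k, k+1)). Then there exist w₁', w₂' ∈ S_m with N(w₁) ⊆ N(w₁'), N(w₂) ⊆ N(w₂'), N(w₁') ∩ N(w₂') = B, and N(w₁') ∪ N(w₂') = {(i,j) | 1 ≤ i < j ≤ m}. -/

import Mathlib

/-- The inversion set `N(w) = {(i,j) | i < j, w⁻¹(i) > w⁻¹(j)}` of a permutation,
realizing `Φ⁺(w)` in type `A_{m−1}`. -/
def invSet (m : ℕ) (w : Equiv.Perm (Fin m)) : Finset (Fin m × Fin m) :=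
  Finset.univ.filter (fun p => p.1 < p.2 ∧ w⁻¹ p.2 < w⁻¹ p.1)

/-- A pair `(k, k+1)`, corresponding to a simple root. -/
def IsSimplePair {m : ℕ} (p : Fin m × Fin m) : Prop :=
  (p.1 : ℕ) + 1 = (p.2 : ℕ)

instance {m : ℕ} : DecidablePred (IsSimplePair (m := m)) :=
  fun p => inferInstanceAs (Decidable ((p.1 : ℕ) + 1 = (p.2 : ℕ)))

/-- Orthogonality of the roots `e_i − e_j` and `e_k − e_l`: `{i,j} ∩ {k,l} = ∅`. -/
def OrthPair {m : ℕ} (p q : Fin m × Fin m) : Prop :=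
  p.1 ≠ q.1 ∧ p.1 ≠ q.2 ∧ p.2 ≠ q.1 ∧ p.2 ≠ q.2

/-- A set of pairs is pairwise orthogonal. -/
def PairwiseOrth {m : ℕ} (B : Finset (Fin m × Fin m)) : Prop :=
  ∀ p ∈ B, ∀ q ∈ B, p ≠ q → OrthPair p q

theorem mem_invSet {m : ℕ} (w : Equiv.Perm (Fin m)) (a b : Fin m) :
    (a, b) ∈ invSet m w ↔ a < b ∧ w⁻¹ b < w⁻¹ a := by
  simp [invSet]

/-- Swapping two adjacent non-inverted letters adds exactly one inversion. -/
theorem invSet_swap {m : ℕ} (w : Equiv.Perm (Fin m)) (a b : Fin m) (hab : a < b)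
    (h : (w⁻¹ a : ℕ) + 1 = (w⁻¹ b : ℕ)) :
    invSet m (w * Equiv.swap (w⁻¹ a) (w⁻¹ b)) = insert (a, b) (invSet m w) := by
  ext ⟨x, y⟩
  rw [Finset.mem_insert, mem_invSet, mem_invSet, mul_inv_rev, Equiv.swap_inv,
    Equiv.Perm.mul_apply, Equiv.Perm.mul_apply, Prod.mk.injEq]
  have ha : ∀ z, w⁻¹ z = w⁻¹ a ↔ z = a := fun z => (w⁻¹).injective.eq_iff
  have hb : ∀ z, w⁻¹ z = w⁻¹ b ↔ z = b := fun z => (w⁻¹).injective.eq_iff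
  have hxa := ha x
  have hya := ha y
  have hxb := hb x
  have hyb := hb y
  rw [Equiv.swap_apply_def, Equiv.swap_apply_def]
  generalize w⁻¹ x = X at *
  generalize w⁻¹ y = Y at *
  generalize w⁻¹ a = A at *
  generalize w⁻¹ b = C at *
  clear ha hb
  split_ifs <;> simp only [Fin.ext_iff, Fin.lt_def] at * <;> omega

/-- In a locally maximal `w`, each pair of `B` occupies adjacent positions. -/
theorem adj_of_max {m : ℕ} (w v : Equiv.Perm (Fin m))
    (hs : ∀ a b, (a, b) ∈ invSet m w → (a, b) ∈ invSet m v → (a : ℕ) + 1 = b)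
    (hmax : ∀ a b, a < b → (w⁻¹ a : ℕ) + 1 = (w⁻¹ b : ℕ) → (a, b) ∈ invSet m v)
    (k l : Fin m) (h1 : (k, l) ∈ invSet m w) (h2 : (k, l) ∈ invSet m v) :
    (w⁻¹ l : ℕ) + 1 = (w⁻¹ k : ℕ) := by
  have hkl := hs k l h1 h2
  simp only [mem_invSet] at *
  obtain ⟨-, h1⟩ := h1
  obtain ⟨-, h2⟩ := h2
  have key : ∀ n : ℕ, ∀ x : Fin m, (w⁻¹ x : ℕ) = (w⁻¹ l : ℕ) + n → w⁻¹ x < w⁻¹ k → x ≤ l := by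
    intro n
    induction n with
    | zero =>
      intro x hx _
      have : w⁻¹ x = w⁻¹ l := Fin.ext (by omega)
      exact ((w⁻¹).injective this).le
    | succ n ih =>
      intro y hy hyk
      by_contra hly
      push Not at hly
      have hlt : (w⁻¹ l : ℕ) + n < m := by omega
      obtain ⟨x, hx⟩ := (w⁻¹).surjective ⟨(w⁻¹ l : ℕ) + n, hlt⟩
      have hxv : (w⁻¹ x : ℕ) = (w⁻¹ l : ℕ) + n := by rw [hx]
      have hxl := ih x hxv (by rw [Fin.lt_def] at *; omega)
      have hxy := hmax x y (lt_of_le_of_lt hxl hly) (by omega)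
      have hky : ¬ (v⁻¹ y < v⁻¹ k) := fun hc => by
        have := hs k y ⟨by rw [Fin.lt_def] at *; omega, hyk⟩ ⟨by rw [Fin.lt_def] at *; omega, hc⟩
        rw [Fin.lt_def] at *; omega
      by_cases hxe : x = l
      · subst hxe
        exact hky (hxy.2.trans h2)
      · have hxne : x ≠ k := by rintro rfl; exact hky hxy.2
        have hxk : x < k := by
          rw [Fin.lt_def]; rw [Fin.le_def] at hxl; rw [Ne, Fin.ext_iff] at *; omega
        have hn : n ≠ 0 := by
          rintro rfl
          exact hxe ((w⁻¹).injective (Fin.ext (by omega)))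
        have hxv2 : ¬ (v⁻¹ l < v⁻¹ x) := fun hc => by
          have := hs x l ⟨by rw [Fin.lt_def] at *; omega, by rw [Fin.lt_def]; omega⟩
            ⟨by rw [Fin.lt_def] at *; omega, hc⟩
          rw [Fin.lt_def] at *; omega
        have := hxy.2
        rw [Fin.lt_def] at *
        omega
  by_contra hne
  rw [Fin.lt_def] at h1
  have hlt : (w⁻¹ k : ℕ) - 1 < m := by omega
  obtain ⟨x, hx⟩ := (w⁻¹).surjective ⟨(w⁻¹ k : ℕ) - 1, hlt⟩
  have hxv : (w⁻¹ x : ℕ) = (w⁻¹ k : ℕ) - 1 := by rw [hx]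
  have hxl := key ((w⁻¹ k : ℕ) - 1 - w⁻¹ l) x (by omega) (by rw [Fin.lt_def]; omega)
  have hxe : x ≠ l := by rintro rfl; omega
  have hxne : x ≠ k := by rintro rfl; omega
  have hxk : x < k := by
    rw [Fin.lt_def]; rw [Fin.le_def] at hxl; rw [Ne, Fin.ext_iff] at *; omega
  have hxy := hmax x k hxk (by omega)
  have := hs x l ⟨by rw [Fin.lt_def] at *; omega, by rw [Fin.lt_def]; omega⟩
    ⟨by rw [Fin.lt_def] at *; omega, h2.trans hxy.2⟩
  rw [Fin.lt_def] at *; omega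

/-- Reversal of the two orders in a locally maximal pair. -/
theorem rev_of_max {m : ℕ} (w v : Equiv.Perm (Fin m)) (B : Finset (Fin m × Fin m))
    (hB : invSet m w ∩ invSet m v = B) (horth : PairwiseOrth B)
    (hs : ∀ p ∈ B, IsSimplePair p)
    (hmax : ∀ a b, a < b → (w⁻¹ a : ℕ) + 1 = (w⁻¹ b : ℕ) → (a, b) ∈ invSet m v)
    (hmax' : ∀ a b, a < b → (v⁻¹ a : ℕ) + 1 = (v⁻¹ b : ℕ) → (a, b) ∈ invSet m w) :
    ∀ n : ℕ, ∀ a b : Fin m, (w⁻¹ b : ℕ) = (w⁻¹ a : ℕ) + n + 1 → (b, a) ∈ B ∨ v⁻¹ b < v⁻¹ a := by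
  have memB : ∀ a b, (a, b) ∈ B ↔ (a, b) ∈ invSet m w ∧ (a, b) ∈ invSet m v := by
    intro a b; rw [← hB, Finset.mem_inter]
  have adjv : ∀ k l, (k, l) ∈ B → (v⁻¹ l : ℕ) + 1 = (v⁻¹ k : ℕ) := by
    intro k l h
    refine adj_of_max v w (fun a b h1 h2 => hs (a, b) ((memB a b).2 ⟨h2, h1⟩)) hmax' k l
      ((memB k l).1 h).2 ((memB k l).1 h).1
  have step : ∀ a b : Fin m, (w⁻¹ b : ℕ) = (w⁻¹ a : ℕ) + 1 → (b, a) ∈ B ∨ v⁻¹ b < v⁻¹ a := by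
    intro a b hab
    rcases lt_trichotomy a b with h | h | h
    · exact Or.inr ((mem_invSet _ _ _).1 (hmax a b h hab.symm)).2
    · subst h; omega
    · by_cases hc : v⁻¹ b < v⁻¹ a
      · exact Or.inr hc
      · left
        rw [memB, mem_invSet, mem_invSet]
        have hne : v⁻¹ b ≠ v⁻¹ a := fun e => h.ne ((v⁻¹).injective e)
        refine ⟨⟨h, by rw [Fin.lt_def]; omega⟩, h, lt_of_le_of_ne (not_lt.1 hc) hne.symm⟩
  intro n
  induction n with
  | zero => intro a b h; exact step a b h
  | succ n ih =>
    intro a b h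
    have hlt : (w⁻¹ a : ℕ) + n + 1 < m := by omega
    obtain ⟨c, hc⟩ := (w⁻¹).surjective ⟨(w⁻¹ a : ℕ) + n + 1, hlt⟩
    have hcv : (w⁻¹ c : ℕ) = (w⁻¹ a : ℕ) + n + 1 := by rw [hc]
    have hab : (v⁻¹ b : ℕ) ≠ v⁻¹ a := fun e => by
      have := (v⁻¹).injective (Fin.ext e)
      subst this; omega
    right
    rcases ih a c hcv with h1 | h1 <;> rcases step c b (by omega) with h2 | h2
    · exfalso
      have hne : ((c, a) : Fin m × Fin m) ≠ (b, c) := by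
        intro e
        rw [Prod.mk.injEq] at e
        have := e.2
        subst this; omega
      exact (horth _ h1 _ h2 hne).2.1 rfl
    · have := adjv _ _ h1
      rw [Fin.lt_def] at *; omega
    · have := adjv _ _ h2
      rw [Fin.lt_def] at *; omega
    · exact h2.trans h1


/-- The fill-up theorem when `B = N(w₁) ∩ N(w₂)` consists of pairwise orthogonal
simple pairs. -/
theorem fillup_simple {m : ℕ} (w₁ w₂ : Equiv.Perm (Fin m))
    (B : Finset (Fin m × Fin m)) (hB : B = invSet m w₁ ∩ invSet m w₂)
    (hne : B.Nonempty) (horth : PairwiseOrth B)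
    (hsimple : ∀ p ∈ B, IsSimplePair p) :
    ∃ w₁' w₂' : Equiv.Perm (Fin m),
      invSet m w₁ ⊆ invSet m w₁' ∧ invSet m w₂ ⊆ invSet m w₂' ∧
      invSet m w₁' ∩ invSet m w₂' = B ∧
      invSet m w₁' ∪ invSet m w₂' = Finset.univ.filter (fun p => p.1 < p.2) := by
  classical
  let P : Equiv.Perm (Fin m) × Equiv.Perm (Fin m) → Prop := fun q =>
    invSet m w₁ ⊆ invSet m q.1 ∧ invSet m w₂ ⊆ invSet m q.2 ∧ invSet m q.1 ∩ invSet m q.2 = B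
  obtain ⟨⟨w, v⟩, hP, hM⟩ := Finset.exists_max_image (Finset.univ.filter P)
    (fun q => (invSet m q.1).card + (invSet m q.2).card)
    ⟨(w₁, w₂), by simp [P, hB]⟩
  simp only [Finset.mem_filter, Finset.mem_univ, true_and, P] at hP hM
  obtain ⟨hw, hv, hI⟩ := hP
  have hmax : ∀ a b, a < b → (w⁻¹ a : ℕ) + 1 = (w⁻¹ b : ℕ) → (a, b) ∈ invSet m v := by
    intro a b hab h
    by_contra hn
    have hsw := invSet_swap w a b hab h
    have hnw : (a, b) ∉ invSet m w := by
      rw [mem_invSet, Fin.lt_def, Fin.lt_def]; omega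
    have := hM (w * Equiv.swap (w⁻¹ a) (w⁻¹ b), v) (by
      simp only [hsw]
      exact ⟨hw.trans (Finset.subset_insert _ _), hv, by
        rw [Finset.insert_inter_of_notMem hn, hI]⟩)
    simp only [hsw, Finset.card_insert_of_notMem hnw] at this
    omega
  have hmax' : ∀ a b, a < b → (v⁻¹ a : ℕ) + 1 = (v⁻¹ b : ℕ) → (a, b) ∈ invSet m w := by
    intro a b hab h
    by_contra hn
    have hsw := invSet_swap v a b hab h
    have hnw : (a, b) ∉ invSet m v := by
      rw [mem_invSet, Fin.lt_def, Fin.lt_def]; omega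
    have := hM (w, v * Equiv.swap (v⁻¹ a) (v⁻¹ b)) (by
      simp only [hsw]
      exact ⟨hw, hv.trans (Finset.subset_insert _ _), by
        rw [Finset.inter_insert_of_notMem hn, hI]⟩)
    simp only [hsw, Finset.card_insert_of_notMem hnw] at this
    omega
  refine ⟨w, v, hw, hv, hI, ?_⟩
  ext ⟨i, j⟩
  simp only [Finset.mem_union, mem_invSet, Finset.mem_filter, Finset.mem_univ, true_and]
  constructor
  · rintro (h | h) <;> exact h.1
  · intro hij
    by_cases hc : w⁻¹ j < w⁻¹ i
    · exact Or.inl ⟨hij, hc⟩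
    · right
      refine ⟨hij, ?_⟩
      have hne : (w⁻¹ j : ℕ) ≠ w⁻¹ i := fun e => hij.ne' ((w⁻¹).injective (Fin.ext e))
      rw [Fin.lt_def] at hc
      rcases rev_of_max w v B hI horth hsimple hmax hmax' ((w⁻¹ j : ℕ) - w⁻¹ i - 1) i j
        (by omega) with h | h
      · have := hsimple _ h
        simp only [IsSimplePair] at this
        rw [Fin.lt_def] at hij; omega
      · exact h
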